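/- The function u : ℝ × ℝ² → ℝ defined by u(t,x) := (e^{-2t} + |x|²)^{-1} satisfies the partial differential equation ∂u/∂t(t,x) = -½ Δ_x (log u)(t,x) for all (t,x) ∈ ℝ × ℝ²; explicitly, both sides equal 2 e^{-2t} / (e^{-2t} + |x|²)², where Δ_x denotes the Euclidean Laplacian in the space variable and Δ_x (log u)(t,x) = -4 e^{-2t}/(e^{-2t} + |x|²)². -/

import Mathlib

/-!
A radial function `f(|x|²)` on an inner product space of dimension `n` has Laplacian
`4 |x|² f''(|x|²) + 2 n f'(|x|²)`. For `log u = f(|x|²)` with `f(r) = -log (a + r)` and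
`a = e^{-2t}` this is `(4 |x|² - 2 n (a + |x|²)) / (a + |x|²)²`. Exactly when `n = 2` the terms in
`|x|²` cancel and `-4 a / (a + |x|²)²` is left, a multiple of the time derivative of `u`.
-/

/-- The Euclidean Laplacian of a real-valued function on `ℝ²`, defined as the sum of the
second directional derivatives along the standard orthonormal basis. -/
noncomputable def euclLaplacian (F : EuclideanSpace ℝ (Fin 2) → ℝ)
    (x : EuclideanSpace ℝ (Fin 2)) : ℝ :=
  ∑ i : Fin 2,
    fderiv ℝ (fun y => fderiv ℝ F y (EuclideanSpace.single i (1 : ℝ))) x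
      (EuclideanSpace.single i (1 : ℝ))

section Laplacians

open InnerProductSpace Laplacian Topology

section Radial

variable {E F : Type*} [NormedAddCommGroup E] [InnerProductSpace ℝ E]
  [NormedAddCommGroup F] [NormedSpace ℝ F]

lemma hasFDerivAt_comp_norm_sq {f : ℝ → F} {f' : F} {x : E} (hf : HasDerivAt f f' (‖x‖ ^ 2)) :
    HasFDerivAt (fun y : E ↦ f (‖y‖ ^ 2)) ((innerSL ℝ x).smulRight ((2 : ℝ) • f')) x := by
  refine (hf.hasFDerivAt.comp x (hasStrictFDerivAt_norm_sq x).hasFDerivAt).congr_fderiv ?_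
  ext v
  simp only [ContinuousLinearMap.comp_smul, smul_apply, ContinuousLinearMap.comp_apply,
    coe_innerSL_apply, ContinuousLinearMap.toSpanSingleton_apply,
    ContinuousLinearMap.smulRight_apply]
  module

variable {f f' : ℝ → F} {f'' : F} {x : E}

lemma fderiv_comp_norm_sq_eventuallyEq
    (hf : ∀ᶠ r in 𝓝 (‖x‖ ^ 2), HasDerivAt f (f' r) r) :
    fderiv ℝ (fun y : E ↦ f (‖y‖ ^ 2)) =ᶠ[𝓝 x]
      fun y ↦ (innerSL ℝ y).smulRight ((2 : ℝ) • f' (‖y‖ ^ 2)) := by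
  have hcont : ContinuousAt (fun y : E ↦ ‖y‖ ^ 2) x := by fun_prop
  filter_upwards [hcont.eventually hf] with y hy
  exact (hasFDerivAt_comp_norm_sq hy).fderiv

lemma differentiableAt_fderiv_comp_norm_sq
    (hf : ∀ᶠ r in 𝓝 (‖x‖ ^ 2), HasDerivAt f (f' r) r) (hf' : DifferentiableAt ℝ f' (‖x‖ ^ 2)) :
    DifferentiableAt ℝ (fderiv ℝ fun y : E ↦ f (‖y‖ ^ 2)) x := by
  refine DifferentiableAt.congr_of_eventuallyEq ?_ (fderiv_comp_norm_sq_eventuallyEq hf)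
  have hcomp : DifferentiableAt ℝ (fun y : E ↦ f' (‖y‖ ^ 2)) x :=
    (hasFDerivAt_comp_norm_sq hf'.hasDerivAt).differentiableAt
  exact ((ContinuousLinearMap.smulRightL ℝ E F).hasFDerivAt_of_bilinear
    (innerSL ℝ (E := E)).hasFDerivAt (hcomp.const_smul (2 : ℝ)).hasFDerivAt).differentiableAt

lemma fderiv_fderiv_comp_norm_sq_apply
    (hf : ∀ᶠ r in 𝓝 (‖x‖ ^ 2), HasDerivAt f (f' r) r) (hf' : HasDerivAt f' f'' (‖x‖ ^ 2))
    (v w : E) :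
    fderiv ℝ (fderiv ℝ fun y : E ↦ f (‖y‖ ^ 2)) x v w =
      (4 * (inner ℝ x v * inner ℝ x w)) • f'' + (2 * inner ℝ v w) • f' (‖x‖ ^ 2) := by
  have hdir : (fun y ↦ fderiv ℝ (fun z : E ↦ f (‖z‖ ^ 2)) y w) =ᶠ[𝓝 x]
      fun y ↦ inner ℝ y w • (2 : ℝ) • f' (‖y‖ ^ 2) :=
    (fderiv_comp_norm_sq_eventuallyEq hf).fun_comp fun L ↦ L w
  have hinner : HasFDerivAt (fun y : E ↦ inner ℝ y w) (innerSL ℝ w) x := by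
    simpa only [coe_innerSL_apply, real_inner_comm] using (innerSL ℝ w).hasFDerivAt (x := x)
  have hprod := hinner.fun_smul ((hasFDerivAt_comp_norm_sq hf').fun_const_smul (2 : ℝ))
  calc fderiv ℝ (fderiv ℝ fun y : E ↦ f (‖y‖ ^ 2)) x v w
      = fderiv ℝ (fun y ↦ fderiv ℝ (fun z : E ↦ f (‖z‖ ^ 2)) y w) x v := by
        simp [fderiv_clm_apply (differentiableAt_fderiv_comp_norm_sq hf hf'.differentiableAt)
          (differentiableAt_const w)]
    _ = (4 * (inner ℝ x v * inner ℝ x w)) • f'' + (2 * inner ℝ v w) • f' (‖x‖ ^ 2) := by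
        rw [hdir.fderiv_eq, hprod.fderiv]
        simp only [add_apply, smul_apply, ContinuousLinearMap.smulRight_apply, coe_innerSL_apply,
          real_inner_comm v w]
        module

theorem laplacian_comp_norm_sq [FiniteDimensional ℝ E]
    (hf : ∀ᶠ r in 𝓝 (‖x‖ ^ 2), HasDerivAt f (f' r) r) (hf' : HasDerivAt f' f'' (‖x‖ ^ 2)) :
    (Δ fun y : E ↦ f (‖y‖ ^ 2)) x =
      (4 * ‖x‖ ^ 2) • f'' + (2 * Module.finrank ℝ E : ℝ) • f' (‖x‖ ^ 2) := by
  let b := stdOrthonormalBasis ℝ E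
  calc (Δ fun y : E ↦ f (‖y‖ ^ 2)) x
      = ∑ i, ((4 * inner ℝ x (b i) ^ 2) • f'' + (2 : ℝ) • f' (‖x‖ ^ 2)) := by
        simp [laplacian_eq_iteratedFDeriv_orthonormalBasis _ b, iteratedFDeriv_two_apply,
          fderiv_fderiv_comp_norm_sq_apply hf hf', ← sq]
    _ = (4 * ‖x‖ ^ 2) • f'' + (2 * Module.finrank ℝ E : ℝ) • f' (‖x‖ ^ 2) := by
        rw [Finset.sum_add_distrib, ← Finset.sum_smul, ← Finset.mul_sum, b.sum_sq_inner_left]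
        simp only [Finset.sum_const, Finset.card_univ, Fintype.card_fin]
        module

end Radial

theorem euclLaplacian_eq_laplacian {f : EuclideanSpace ℝ (Fin 2) → ℝ}
    {x : EuclideanSpace ℝ (Fin 2)} (hf : DifferentiableAt ℝ (fderiv ℝ f) x) :
    euclLaplacian f x = (Δ f) x := by
  simp [euclLaplacian, fderiv_clm_apply hf (differentiableAt_const _),
    laplacian_eq_iteratedFDeriv_orthonormalBasis f (EuclideanSpace.basisFun (Fin 2) ℝ),
    iteratedFDeriv_two_apply]

section LogInv

variable {E : Type*} [NormedAddCommGroup E] [InnerProductSpace ℝ E] {a : ℝ}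

lemma hasDerivAt_log_inv_const_add {r : ℝ} (h : a + r ≠ 0) :
    HasDerivAt (fun s ↦ Real.log (a + s)⁻¹) (-(a + r)⁻¹) r := by
  simpa [Real.log_inv] using (((hasDerivAt_id r).const_add a).log h).fun_neg

lemma hasDerivAt_neg_inv_const_add {r : ℝ} (h : a + r ≠ 0) :
    HasDerivAt (fun s ↦ -(a + s)⁻¹) ((a + r) ^ 2)⁻¹ r := by
  simpa [neg_div] using (((hasDerivAt_id r).const_add a).fun_inv h).fun_neg

lemma eventually_hasDerivAt_log_inv_const_add {r : ℝ} (h : a + r ≠ 0) :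
    ∀ᶠ s in 𝓝 r, HasDerivAt (fun s ↦ Real.log (a + s)⁻¹) (-(a + s)⁻¹) s := by
  have hcont : ContinuousAt (fun s ↦ a + s) r := by fun_prop
  filter_upwards [hcont.eventually_ne h] with s hs
  exact hasDerivAt_log_inv_const_add hs

lemma differentiableAt_fderiv_log_inv_const_add_norm_sq {x : E} (h : a + ‖x‖ ^ 2 ≠ 0) :
    DifferentiableAt ℝ (fderiv ℝ fun y : E ↦ Real.log (a + ‖y‖ ^ 2)⁻¹) x :=
  differentiableAt_fderiv_comp_norm_sq (eventually_hasDerivAt_log_inv_const_add h)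
    (hasDerivAt_neg_inv_const_add h).differentiableAt

theorem laplacian_log_inv_const_add_norm_sq [FiniteDimensional ℝ E] {x : E}
    (h : a + ‖x‖ ^ 2 ≠ 0) :
    (Δ fun y : E ↦ Real.log (a + ‖y‖ ^ 2)⁻¹) x =
      (4 * ‖x‖ ^ 2 - 2 * Module.finrank ℝ E * (a + ‖x‖ ^ 2)) / (a + ‖x‖ ^ 2) ^ 2 := by
  rw [laplacian_comp_norm_sq (eventually_hasDerivAt_log_inv_const_add h)
    (hasDerivAt_neg_inv_const_add h)]
  simp only [smul_eq_mul]
  field_simp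
  ring

theorem euclLaplacian_log_inv_const_add_norm_sq {x : EuclideanSpace ℝ (Fin 2)}
    (h : a + ‖x‖ ^ 2 ≠ 0) :
    euclLaplacian (fun y ↦ Real.log (a + ‖y‖ ^ 2)⁻¹) x = -4 * a / (a + ‖x‖ ^ 2) ^ 2 := by
  rw [euclLaplacian_eq_laplacian (differentiableAt_fderiv_log_inv_const_add_norm_sq h),
    laplacian_log_inv_const_add_norm_sq h, finrank_euclideanSpace_fin]
  push_cast
  ring

end LogInv

end Laplacians

lemma hasDerivAt_inv_exp_mul_add_const {k b t : ℝ} (h : Real.exp (k * t) + b ≠ 0) :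
    HasDerivAt (fun s ↦ (Real.exp (k * s) + b)⁻¹)
      (-k * Real.exp (k * t) / (Real.exp (k * t) + b) ^ 2) t := by
  have hexp : HasDerivAt (fun s ↦ Real.exp (k * s)) (k * Real.exp (k * t)) t := by
    simpa [mul_comm] using ((hasDerivAt_id t).const_mul k).exp
  simpa using (hexp.add_const b).fun_inv h

/-- Hamilton's cigar is an eternal solution of the backward Ricci flow: the conformal
factor `u(t,x) = (e^{-2t} + |x|²)^{-1}` satisfies `∂u/∂t = -½ Δ_x (log u)`, with
`∂u/∂t = 2 e^{-2t}/(e^{-2t} + |x|²)²` and `Δ_x (log u) = -4 e^{-2t}/(e^{-2t} + |x|²)²`. -/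
theorem cigar_backward_ricci_flow (t : ℝ) (x : EuclideanSpace ℝ (Fin 2)) :
    deriv (fun s : ℝ => (Real.exp (-2 * s) + ‖x‖ ^ 2)⁻¹) t
        = 2 * Real.exp (-2 * t) / (Real.exp (-2 * t) + ‖x‖ ^ 2) ^ 2
    ∧ euclLaplacian (fun y => Real.log ((Real.exp (-2 * t) + ‖y‖ ^ 2)⁻¹)) x
        = -4 * Real.exp (-2 * t) / (Real.exp (-2 * t) + ‖x‖ ^ 2) ^ 2
    ∧ deriv (fun s : ℝ => (Real.exp (-2 * s) + ‖x‖ ^ 2)⁻¹) t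
        = -(1 / 2) * euclLaplacian (fun y => Real.log ((Real.exp (-2 * t) + ‖y‖ ^ 2)⁻¹)) x := by
  have hw : Real.exp (-2 * t) + ‖x‖ ^ 2 ≠ 0 := by positivity
  have htime : deriv (fun s : ℝ => (Real.exp (-2 * s) + ‖x‖ ^ 2)⁻¹) t
      = 2 * Real.exp (-2 * t) / (Real.exp (-2 * t) + ‖x‖ ^ 2) ^ 2 := by
    simpa using (hasDerivAt_inv_exp_mul_add_const hw).deriv
  have hspace := euclLaplacian_log_inv_const_add_norm_sq hw
  refine ⟨htime, hspace, ?_⟩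
  rw [htime, hspace]
  ring
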